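/- If the utility prices are strictly positive, ξ(t) > 0 for all t, and the energy-transfer price satisfies τ > 0, then the coalitional cost minimization problem attains its minimum: for any finite set G of households there exists a coalitionally feasible point whose coalitional objective value F_G equals c^ResEss(G), the infimum of F_G over all coalitionally feasible points. -/

import Mathlib

open Finset

/-- Storage recursion: `s 0 = (1-η)·s0 + r 0` and `s t = (1-η)·s (t-1) + r t` for `t ≥ 1`. -/
def StorageRec {T : ℕ} (η s0 : ℝ) (r s : Fin T → ℝ) : Prop :=
  ∀ t : Fin T,
    s t = (1 - η) * (if _h : (t : ℕ) = 0 then s0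
      else s ⟨(t : ℕ) - 1, lt_of_le_of_lt (Nat.sub_le _ _) t.isLt⟩) + r t

/-- Individual feasibility of a triple `(b, r, s)` for household data `(u, w, C, ρ, η, s0)`. -/
def IndivFeasible {T : ℕ} (u w : Fin T → ℝ) (C ρ η s0 : ℝ)
    (b r s : Fin T → ℝ) : Prop :=
  (∀ t, u t - w t - b t + r t ≤ 0) ∧
  (∀ t, 0 ≤ b t) ∧
  (∀ t, |r t| ≤ ρ) ∧
  StorageRec η s0 r s ∧
  (∀ t, 0 ≤ s t ∧ s t ≤ C)

/-- Coalitional feasibility for a finite set `G` of households. -/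
def CoalFeasible {ι : Type*} {T : ℕ} (u w : ι → Fin T → ℝ) (C ρ η s0 : ι → ℝ)
    (G : Finset ι) (b r s a : ι → Fin T → ℝ) : Prop :=
  (∀ g ∈ G, ∀ t, 0 ≤ b g t) ∧
  (∀ g ∈ G, ∀ t, |r g t| ≤ ρ g) ∧
  (∀ g ∈ G, StorageRec (η g) (s0 g) (r g) (s g)) ∧
  (∀ g ∈ G, ∀ t, 0 ≤ s g t ∧ s g t ≤ C g) ∧
  (∀ g ∈ G, ∀ t, u g t - w g t - b g t + r g t + a g t ≤ 0) ∧
  (∀ t, ∑ g ∈ G, a g t = 0)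

/-- The coalitional objective `F_G`. -/
noncomputable def coalObj {ι : Type*} {T : ℕ} (ξ : Fin T → ℝ) (u w : ι → Fin T → ℝ)
    (π σ τ : ℝ) (G : Finset ι) (b r a : ι → Fin T → ℝ) : ℝ :=
  ∑ g ∈ G, (∑ t, ξ t * b g t + π * ∑ t, |r g t| + τ * ∑ t, |a g t|
    + σ * ∑ t, (b g t + w g t - u g t - a g t - r g t))

/-- The coalitional optimal cost `c^ResEss(G)`: infimum of `F_G` over coalitionally
feasible points. -/
noncomputable def coalCost {ι : Type*} {T : ℕ} (ξ : Fin T → ℝ) (u w : ι → Fin T → ℝ)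
    (C ρ η s0 : ι → ℝ) (π σ τ : ℝ) (G : Finset ι) : ℝ :=
  sInf {c : ℝ | ∃ b r s a : ι → Fin T → ℝ,
    CoalFeasible u w C ρ η s0 G b r s a ∧ coalObj ξ u w π σ τ G b r a = c}

/-!
Since the transfers `a` cancel within the coalition, the penalty term charges every purchase `b g t`
at the extra rate `σ`, so the effective purchase price is `ξ t + σ > 0`. The charging rates are
bounded, hence a bound on the objective bounds the purchases. Bounded purchases bound the transfers
from above through the energy balance, and then from below because the transfers sum to zero.
So, up to the irrelevant values off the coalition, sublevel sets of the objective on the closed set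
of feasible points are compact, and a continuous function attains its minimum there.
-/

section Feasibility

theorem storageRec_zero {T : ℕ} (η s0 : ℝ) :
    StorageRec (T := T) η s0 0 fun t => (1 - η) ^ ((t : ℕ) + 1) * s0 := by
  intro t
  dsimp only
  split_ifs with ht
  · simp [ht]
  · rw [Nat.sub_add_cancel (Nat.pos_of_ne_zero ht), Pi.zero_apply]
    ring

theorem indivFeasible_idle {T : ℕ} (u w : Fin T → ℝ) {C ρ η s0 : ℝ} (hρ : 0 ≤ ρ)
    (hη0 : 0 ≤ η) (hη1 : η ≤ 1) (hs00 : 0 ≤ s0) (hs0C : s0 ≤ C) :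
    IndivFeasible u w C ρ η s0 (fun t => (u t - w t)⁺) 0
      (fun t => (1 - η) ^ ((t : ℕ) + 1) * s0) := by
  have hη : 0 ≤ 1 - η := sub_nonneg.2 hη1
  refine ⟨fun t => ?_, fun t => posPart_nonneg _, fun t => by simpa using hρ,
    storageRec_zero η s0, fun t => ⟨by positivity, ?_⟩⟩
  · simpa using le_posPart (u t - w t)
  · exact (mul_le_of_le_one_left hs00 (pow_le_one₀ hη (sub_le_self 1 hη0))).trans hs0C

theorem coalFeasible_of_indivFeasible {ι : Type*} {T : ℕ} {u w : ι → Fin T → ℝ}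
    {C ρ η s0 : ι → ℝ} {G : Finset ι} {b r s : ι → Fin T → ℝ}
    (h : ∀ g ∈ G, IndivFeasible (u g) (w g) (C g) (ρ g) (η g) (s0 g) (b g) (r g) (s g)) :
    CoalFeasible u w C ρ η s0 G b r s 0 := by
  refine ⟨fun g hg => (h g hg).2.1, fun g hg => (h g hg).2.2.1, fun g hg => (h g hg).2.2.2.1,
    fun g hg => (h g hg).2.2.2.2, fun g hg t => ?_, fun t => by simp⟩
  simpa using (h g hg).1 t

end Feasibility

section Congruence

variable {ι : Type*} {T : ℕ} {G : Finset ι} {b b' r r' s s' a a' : ι → Fin T → ℝ}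

theorem CoalFeasible.congr {u w : ι → Fin T → ℝ} {C ρ η s0 : ι → ℝ}
    (h : CoalFeasible u w C ρ η s0 G b r s a) (hb : ∀ g ∈ G, b' g = b g)
    (hr : ∀ g ∈ G, r' g = r g) (hs : ∀ g ∈ G, s' g = s g) (ha : ∀ g ∈ G, a' g = a g) :
    CoalFeasible u w C ρ η s0 G b' r' s' a' := by
  obtain ⟨hb0, hrρ, hrec, hsC, hbal, hsum⟩ := h
  refine ⟨fun g hg => ?_, fun g hg => ?_, fun g hg => ?_, fun g hg => ?_, fun g hg => ?_,
    fun t => ?_⟩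
  · simpa only [hb g hg] using hb0 g hg
  · simpa only [hr g hg] using hrρ g hg
  · simpa only [hr g hg, hs g hg] using hrec g hg
  · simpa only [hs g hg] using hsC g hg
  · simpa only [hb g hg, hr g hg, ha g hg] using hbal g hg
  · exact (sum_congr rfl fun g hg => congrFun (ha g hg) t).trans (hsum t)

theorem coalObj_congr {ξ : Fin T → ℝ} {u w : ι → Fin T → ℝ} {π σ τ : ℝ}
    (hb : ∀ g ∈ G, b' g = b g) (hr : ∀ g ∈ G, r' g = r g) (ha : ∀ g ∈ G, a' g = a g) :
    coalObj ξ u w π σ τ G b' r' a' = coalObj ξ u w π σ τ G b r a :=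
  sum_congr rfl fun g hg => by rw [hb g hg, hr g hg, ha g hg]

end Congruence

section Bounds

theorem mem_Icc_of_sum_eq_zero {ι : Type*} {G : Finset ι} {x c : ι → ℝ}
    (hsum : ∑ g ∈ G, x g = 0) (hle : ∀ g ∈ G, x g ≤ c g) {g : ι} (hg : g ∈ G) :
    x g ∈ Set.Icc (c g - ∑ h ∈ G, c h) (c g) := by
  have hslack : c g - x g ≤ ∑ h ∈ G, (c h - x h) :=
    single_le_sum (f := fun h => c h - x h) (fun h hh => sub_nonneg.2 (hle h hh)) hg
  rw [sum_sub_distrib, hsum, sub_zero] at hslack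
  exact ⟨by linarith, hle g hg⟩

theorem abs_mul_abs_add_mul_sub_le (π σ d : ℝ) {ρ r : ℝ} (hr : |r| ≤ ρ) :
    |π * |r| + σ * (d - r)| ≤ |π| * ρ + |σ| * (|d| + ρ) :=
  calc |π * |r| + σ * (d - r)| ≤ |(π * |r|)| + |σ * (d - r)| := abs_add_le _ _
    _ = |π| * |r| + |σ| * |d - r| := by rw [abs_mul, abs_mul, abs_abs]
    _ ≤ |π| * |r| + |σ| * (|d| + |r|) := by gcongr; exact abs_sub _ _
    _ ≤ |π| * ρ + |σ| * (|d| + ρ) := by gcongr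

variable {ι : Type*} {T : ℕ} {ξ : Fin T → ℝ} {u w : ι → Fin T → ℝ} {C ρ η s0 : ι → ℝ}
  {π σ τ : ℝ} {G : Finset ι} {b r s a : ι → Fin T → ℝ}

theorem coalObj_eq_of_sum_eq_zero (ha : ∀ t, ∑ g ∈ G, a g t = 0) :
    coalObj ξ u w π σ τ G b r a =
      ∑ g ∈ G, ∑ t, ((ξ t + σ) * b g t + τ * |a g t|
        + (π * |r g t| + σ * (w g t - u g t - r g t))) := by
  have hcancel : ∑ g ∈ G, ∑ t, σ * a g t = 0 := by
    rw [sum_comm]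
    simp only [← mul_sum, ha, mul_zero, sum_const_zero]
  rw [← sub_zero (∑ g ∈ G, _), ← hcancel, ← sum_sub_distrib, coalObj]
  refine sum_congr rfl fun g _ => ?_
  simp only [mul_sum, ← sum_add_distrib, ← sum_sub_distrib]
  exact sum_congr rfl fun t _ => by ring

theorem CoalFeasible.sum_purchase_le (h : CoalFeasible u w C ρ η s0 G b r s a) (hτ : 0 ≤ τ) :
    ∑ g ∈ G, ∑ t, (ξ t + σ) * b g t ≤ coalObj ξ u w π σ τ G b r a
      + ∑ g ∈ G, ∑ t : Fin T, (|π| * ρ g + |σ| * (|w g t - u g t| + ρ g)) := by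
  obtain ⟨-, hrρ, -, -, -, hsum⟩ := h
  rw [coalObj_eq_of_sum_eq_zero hsum]
  simp only [← sum_add_distrib]
  refine sum_le_sum fun g hg => sum_le_sum fun t _ => ?_
  have hrate := neg_le_of_abs_le (abs_mul_abs_add_mul_sub_le π σ (w g t - u g t) (hrρ g hg t))
  have htransfer : 0 ≤ τ * |a g t| := by positivity
  linarith

theorem exists_purchase_bound (u w : ι → Fin T → ℝ) (C ρ η s0 : ι → ℝ) (π : ℝ) (G : Finset ι)
    (hξ : ∀ t, 0 < ξ t + σ) (hτ : 0 ≤ τ) (M : ℝ) :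
    ∃ B : Fin T → ℝ, ∀ b r s a, CoalFeasible u w C ρ η s0 G b r s a →
      coalObj ξ u w π σ τ G b r a ≤ M → ∀ g ∈ G, ∀ t, b g t ≤ B t := by
  refine ⟨fun t => (M + ∑ g ∈ G, ∑ t : Fin T, (|π| * ρ g + |σ| * (|w g t - u g t| + ρ g)))
    / (ξ t + σ), fun b r s a h hM g hg t => ?_⟩
  have hnonneg : ∀ g ∈ G, ∀ t, 0 ≤ (ξ t + σ) * b g t :=
    fun g hg t => mul_nonneg (hξ t).le (h.1 g hg t)
  rw [le_div_iff₀' (hξ t)]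
  calc (ξ t + σ) * b g t
      ≤ ∑ t, (ξ t + σ) * b g t :=
        single_le_sum (f := fun t => (ξ t + σ) * b g t) (fun t _ => hnonneg g hg t) (mem_univ t)
    _ ≤ ∑ g ∈ G, ∑ t, (ξ t + σ) * b g t :=
        single_le_sum (f := fun g => ∑ t, (ξ t + σ) * b g t)
          (fun g hg => sum_nonneg fun t _ => hnonneg g hg t) hg
    _ ≤ _ := (h.sum_purchase_le hτ).trans (by gcongr)

theorem CoalFeasible.transfer_le (h : CoalFeasible u w C ρ η s0 G b r s a) {B : Fin T → ℝ}
    (hB : ∀ g ∈ G, ∀ t, b g t ≤ B t) {g : ι} (hg : g ∈ G) (t : Fin T) :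
    a g t ≤ B t + w g t - u g t + ρ g := by
  obtain ⟨-, hrρ, -, -, hbal, -⟩ := h
  linarith [hbal g hg t, hB g hg t, neg_le_of_abs_le (hrρ g hg t)]

end Bounds

section Compactness

theorem indicator_mem_Icc_indicator {ι E : Type*} [Zero E] [Preorder E] {S : Set ι}
    {f l v : ι → E} (h : ∀ i ∈ S, f i ∈ Set.Icc (l i) (v i)) :
    S.indicator f ∈ Set.Icc (S.indicator l) (S.indicator v) :=
  ⟨fun i => Set.indicator_le_indicator' fun hi => (h i hi).1,
    fun i => Set.indicator_le_indicator' fun hi => (h i hi).2⟩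

/-- An operating schedule `(b, r, s, a)` of the households: purchases, charging rates, storage
levels and transfers. It gathers the decision variables in one space, so that topological facts
about the feasible points can be stated. -/
abbrev Schedule (ι : Type*) (T : ℕ) : Type _ :=
  (ι → Fin T → ℝ) × (ι → Fin T → ℝ) × (ι → Fin T → ℝ) × (ι → Fin T → ℝ)

variable {ι : Type*} {T : ℕ}

theorem isClosed_setOf_storageRec {X : Type*} [TopologicalSpace X] (η s0 : ℝ)
    {r s : X → Fin T → ℝ} (hr : Continuous r) (hs : Continuous s) :
    IsClosed {x | StorageRec η s0 (r x) (s x)} := by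
  simp only [StorageRec, Set.ofPred_forall]
  refine isClosed_iInter fun t => isClosed_eq (by fun_prop) ?_
  split_ifs <;> fun_prop

theorem isClosed_setOf_coalFeasible (u w : ι → Fin T → ℝ) (C ρ η s0 : ι → ℝ) (G : Finset ι) :
    IsClosed {x : Schedule ι T | CoalFeasible u w C ρ η s0 G x.1 x.2.1 x.2.2.1 x.2.2.2} := by
  simp only [CoalFeasible, Set.ofPred_and, Set.ofPred_forall]
  refine .inter ?purchase (.inter ?rate (.inter ?storage (.inter ?capacity
    (.inter ?balance ?transfer))))
  case storage =>
    exact isClosed_biInter fun g _ => isClosed_setOf_storageRec _ _ (by fun_prop) (by fun_prop)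
  case transfer => exact isClosed_iInter fun t => isClosed_eq (by fun_prop) continuous_const
  case capacity =>
    exact isClosed_biInter fun g _ => isClosed_iInter fun t =>
      (isClosed_le (by fun_prop) (by fun_prop)).inter (isClosed_le (by fun_prop) (by fun_prop))
  all_goals
    exact isClosed_biInter fun g _ => isClosed_iInter fun t =>
      isClosed_le (by fun_prop) (by fun_prop)

theorem continuous_coalObj (ξ : Fin T → ℝ) (u w : ι → Fin T → ℝ) (π σ τ : ℝ) (G : Finset ι) :
    Continuous fun x : Schedule ι T => coalObj ξ u w π σ τ G x.1 x.2.1 x.2.2.2 := by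
  unfold coalObj
  fun_prop

variable {ξ : Fin T → ℝ} {σ τ : ℝ}

theorem exists_isCompact_sublevel (u w : ι → Fin T → ℝ) (C ρ η s0 : ι → ℝ) (π : ℝ)
    (G : Finset ι) (hξ : ∀ t, 0 < ξ t + σ) (hτ : 0 ≤ τ) (M : ℝ) :
    ∃ K : Set (Schedule ι T), IsCompact K ∧
      (∀ x ∈ K, CoalFeasible u w C ρ η s0 G x.1 x.2.1 x.2.2.1 x.2.2.2) ∧
      ∀ b r s a, CoalFeasible u w C ρ η s0 G b r s a → coalObj ξ u w π σ τ G b r a ≤ M →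
        ∃ x ∈ K, coalObj ξ u w π σ τ G x.1 x.2.1 x.2.2.2 = coalObj ξ u w π σ τ G b r a := by
  obtain ⟨B, hB⟩ := exists_purchase_bound u w C ρ η s0 π G hξ hτ M
  let A : ι → Fin T → ℝ := fun g t => B t + w g t - u g t + ρ g
  -- Values off `G` are unconstrained, so compactness requires truncating them to zero.
  let box (l v : ι → Fin T → ℝ) : Set (ι → Fin T → ℝ) :=
    Set.Icc ((G : Set ι).indicator l) ((G : Set ι).indicator v)
  let K : Set (Schedule ι T) := box 0 (fun _ => B) ×ˢ box (fun g _ => -ρ g) (fun g _ => ρ g) ×ˢ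
    box 0 (fun g _ => C g) ×ˢ box (fun g t => A g t - ∑ h ∈ G, A h t) A
  have hK : IsCompact K :=
    isCompact_Icc.prod (isCompact_Icc.prod (isCompact_Icc.prod isCompact_Icc))
  refine ⟨K ∩ {x | CoalFeasible u w C ρ η s0 G x.1 x.2.1 x.2.2.1 x.2.2.2},
    hK.inter_right (isClosed_setOf_coalFeasible u w C ρ η s0 G), fun x hx => hx.2,
    fun b r s a h hM => ?_⟩
  have hbB := hB b r s a h hM
  have ⟨hb, hr, _, hs, _, ha⟩ := h
  have hind (f : ι → Fin T → ℝ) : ∀ g ∈ G, (G : Set ι).indicator f g = f g :=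
    fun g hg => Set.indicator_of_mem (mem_coe.2 hg) f
  refine ⟨((G : Set ι).indicator b, (G : Set ι).indicator r, (G : Set ι).indicator s,
    (G : Set ι).indicator a), ⟨⟨?_, ?_, ?_, ?_⟩, ?_⟩, coalObj_congr (hind b) (hind r) (hind a)⟩
  · exact indicator_mem_Icc_indicator fun g hg => ⟨hb g hg, hbB g hg⟩
  · exact indicator_mem_Icc_indicator fun g hg =>
      ⟨fun t => neg_le_of_abs_le (hr g hg t), fun t => le_of_abs_le (hr g hg t)⟩
  · exact indicator_mem_Icc_indicator fun g hg =>
      ⟨fun t => (hs g hg t).1, fun t => (hs g hg t).2⟩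
  · have hA (g) (hg : g ∈ G) (t) : a g t ∈ Set.Icc (A g t - ∑ h ∈ G, A h t) (A g t) :=
      mem_Icc_of_sum_eq_zero (ha t) (fun i hi => h.transfer_le hbB hi t) hg
    exact indicator_mem_Icc_indicator fun g hg =>
      ⟨fun t => (hA g hg t).1, fun t => (hA g hg t).2⟩
  · exact h.congr (hind b) (hind r) (hind s) (hind a)

end Compactness

theorem coal_min_attained_general {ι : Type*} {T : ℕ} {ξ : Fin T → ℝ} {u w : ι → Fin T → ℝ}
    {C ρ η s0 : ι → ℝ} (π : ℝ) {σ τ : ℝ} {G : Finset ι}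
    (hξ : ∀ t, 0 < ξ t + σ) (hτ : 0 ≤ τ)
    (hfeas : ∃ b r s a : ι → Fin T → ℝ, CoalFeasible u w C ρ η s0 G b r s a) :
    ∃ b r s a : ι → Fin T → ℝ,
      CoalFeasible u w C ρ η s0 G b r s a ∧
      coalObj ξ u w π σ τ G b r a = coalCost ξ u w C ρ η s0 π σ τ G := by
  obtain ⟨b₀, r₀, s₀, a₀, h₀⟩ := hfeas
  obtain ⟨K, hK, hKfeas, hKobj⟩ := exists_isCompact_sublevel u w C ρ η s0 π G hξ hτ
    (coalObj ξ u w π σ τ G b₀ r₀ a₀)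
  obtain ⟨x₀, hx₀, hx₀obj⟩ := hKobj b₀ r₀ s₀ a₀ h₀ le_rfl
  obtain ⟨x, hx, hmin⟩ := hK.exists_isMinOn ⟨x₀, hx₀⟩
    (continuous_coalObj ξ u w π σ τ G).continuousOn
  refine ⟨x.1, x.2.1, x.2.2.1, x.2.2.2, hKfeas x hx, (IsLeast.csInf_eq ⟨?_, ?_⟩).symm⟩
  · exact ⟨_, _, _, _, hKfeas x hx, rfl⟩
  · rintro _ ⟨b, r, s, a, h, rfl⟩
    rcases le_total (coalObj ξ u w π σ τ G b r a) (coalObj ξ u w π σ τ G b₀ r₀ a₀) with hle | hge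
    · obtain ⟨y, hy, hyobj⟩ := hKobj b r s a h hle
      exact (isMinOn_iff.1 hmin y hy).trans_eq hyobj
    · exact (isMinOn_iff.1 hmin x₀ hx₀).trans (hx₀obj.trans_le hge)

/-- With strictly positive utility prices and a strictly positive energy-transfer
price, the coalitional cost minimization problem attains its minimum. -/
theorem coal_min_attained {ι : Type*} {T : ℕ} (hT : 1 ≤ T)
    (ξ : Fin T → ℝ) (u w : ι → Fin T → ℝ) (C ρ η s0 : ι → ℝ) (π σ τ : ℝ)
    (hu : ∀ g t, 0 ≤ u g t) (hw : ∀ g t, 0 ≤ w g t)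
    (hC : ∀ g, 0 ≤ C g) (hρ : ∀ g, 0 ≤ ρ g)
    (hη0 : ∀ g, 0 ≤ η g) (hη1 : ∀ g, η g ≤ 1)
    (hs00 : ∀ g, 0 ≤ s0 g) (hs0C : ∀ g, s0 g ≤ C g)
    (hξ : ∀ t, 0 < ξ t) (hπ : 0 ≤ π) (hσ : 0 ≤ σ) (hτ : 0 < τ)
    (G : Finset ι) :
    ∃ b r s a : ι → Fin T → ℝ,
      CoalFeasible u w C ρ η s0 G b r s a ∧
      coalObj ξ u w π σ τ G b r a = coalCost ξ u w C ρ η s0 π σ τ G :=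
  coal_min_attained_general π (fun t => add_pos_of_pos_of_nonneg (hξ t) hσ) hτ.le
    ⟨_, _, _, _, coalFeasible_of_indivFeasible fun g _ =>
      indivFeasible_idle (u g) (w g) (hρ g) (hη0 g) (hη1 g) (hs00 g) (hs0C g)⟩
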